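/- arXiv:2006.10568 — 3 statements merged into one kernel-verified Lean document; each statement's English description precedes it below -/
import Mathlib

section
/- Assume p(A) is a compact operator. Then: (i) every point μ of the spectrum of A with μ ∉ {ω₁,…,ω_L} is an eigenvalue of A whose eigenspace ker(A − μ) is finite-dimensional; and (ii) for every δ > 0, the set {μ ∈ spectrum(A) : |μ − ω_ι| ≥ δ for all ι = 1,…,L} is finite. In particular, the points ω₁,…,ω_L are the only possible accumulation points of the spectrum of A. -/
theorem poly_factor_aux {H : Type*} [NormedAddCommGroup H] [InnerProductSpace ℂ H]
    (A : H →L[ℂ] H) (μ : ℂ) (l : List ℂ) :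
    ∃ Q : H →L[ℂ] H, (l.map fun w => A - w • (1 : H →L[ℂ] H)).prod =
      Q * (A - μ • 1) + (l.map fun w => μ - w).prod • 1 := by
  induction l with
  | nil => exact ⟨0, by simp⟩
  | cons w l ih =>
    obtain ⟨Q, hQ⟩ := ih
    refine ⟨(A - w • 1) * Q + (l.map fun w => μ - w).prod • 1, ?_⟩
    simp only [List.map_cons, List.prod_cons, hQ]
    generalize (l.map fun w => μ - w).prod = c
    simp only [mul_add, add_mul, sub_mul, mul_sub, smul_mul_assoc, mul_smul_comm, one_mul, mul_one,
      smul_sub, sub_smul, mul_smul, mul_assoc]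
    simp only [smul_smul, mul_comm c]
    module

theorem eigen_aux {H : Type*} [NormedAddCommGroup H] [InnerProductSpace ℂ H] [CompleteSpace H]
    (A : H →L[ℂ] H) (hA : IsSelfAdjoint A) (pA Q : H →L[ℂ] H) (μ c : ℂ) (hc : c ≠ 0)
    (hQ : pA = Q * (A - μ • 1) + c • 1) (hcpt : IsCompactOperator pA)
    (hμ : μ ∈ spectrum ℂ A) : Module.End.HasEigenvalue (A : H →ₗ[ℂ] H) μ := by
  by_contra hne
  have hinj : ∀ z : H, (A - μ • 1) z = 0 → z = 0 := by
    intro z hz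
    by_contra h0
    apply hne
    refine Module.End.hasEigenvalue_of_hasEigenvector (x := z) ⟨?_, h0⟩
    rw [Module.End.mem_eigenspace_iff]
    simpa [sub_eq_zero] using hz
  have hpx : ∀ x, pA x = Q ((A - μ • 1) x) + c • x := by
    intro x; rw [hQ]; simp
  set T : H →L[ℂ] H := A - μ • 1 with hT
  have hnorm : IsStarNormal T := by
    constructor
    have h1 : star T = A - (starRingEnd ℂ μ) • 1 := by
      rw [hT, star_sub, star_smul, hA.star_eq, star_one]; rfl
    rw [h1, hT]
    have hA1 : ∀ a : ℂ, Commute (a • (1 : H →L[ℂ] H)) A := fun a =>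
      (Commute.one_left A).smul_left a
    exact Commute.sub_left ((Commute.refl A).sub_right (hA1 _).symm)
      ((hA1 _).sub_right (((Commute.one_left _).smul_right _).smul_left _))
  have hanti : ∃ K, AntilipschitzWith K T := by
    rw [antilipschitzWith_iff_exists_mul_le_norm]
    by_contra! h
    have hx : ∀ n : ℕ, ∃ x : H, ‖x‖ = 1 ∧ ‖T x‖ < 1 / ((n : ℝ) + 1) := by
      intro n
      obtain ⟨x, hx⟩ := h (1 / ((n : ℝ) + 1)) (by positivity)
      have hx0 : x ≠ 0 := by rintro rfl; simp at hx
      have hxn : 0 < ‖x‖ := norm_pos_iff.2 hx0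
      refine ⟨((‖x‖⁻¹ : ℝ) : ℂ) • x, ?_, ?_⟩
      · rw [norm_smul]; simp [hxn.ne']
      · rw [map_smul, norm_smul, Complex.norm_real, norm_inv, norm_norm, inv_mul_lt_iff₀ hxn]
        linarith
    choose x hx1 hxT using hx
    have hT0 : Filter.Tendsto (fun n => T (x n)) Filter.atTop (nhds 0) :=
      squeeze_zero_norm (fun n => (hxT n).le) tendsto_one_div_add_atTop_nhds_zero_nat
    obtain ⟨K, hK, hK'⟩ := IsCompactOperator.image_closedBall_subset_compact
      (f := (pA : H →ₗ[ℂ] H)) hcpt 1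
    obtain ⟨y, -, φ, hφ, hy⟩ := hK.tendsto_subseq (fun n ↦ hK' ⟨x n, by simp [hx1], rfl⟩)
    have hz : Filter.Tendsto (fun n => x (φ n)) Filter.atTop (nhds (c⁻¹ • (y - Q 0))) := by
      have h2 := (Q.continuous.tendsto 0).comp (hT0.comp hφ.tendsto_atTop)
      have h3 := (hy.sub h2).const_smul c⁻¹
      refine h3.congr fun n => ?_
      simp [hpx, smul_smul, hc]
    have hz1 := hz.norm
    simp only [hx1] at hz1
    have h4 := tendsto_nhds_unique hz1 tendsto_const_nhds
    have h5 := tendsto_nhds_unique ((T.continuous.tendsto _).comp hz)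
      (hT0.comp hφ.tendsto_atTop)
    rw [hinj _ h5] at h4
    simp at h4
  have hker : T.ker = ⊥ := by
    rw [eq_bot_iff]; intro z hz; simpa using hinj z (by simpa using hz)
  have hbij : Function.Bijective T := by
    rw [ContinuousLinearMap.bijective_iff_dense_range_and_antilipschitz]
    refine ⟨?_, hanti⟩
    rw [Submodule.topologicalClosure_eq_top_iff, ContinuousLinearMap.IsStarNormal.orthogonal_range hnorm, hker]
  rw [← ContinuousLinearMap.isUnit_iff_bijective] at hbij
  apply hμ
  rw [spectrum.mem_resolventSet_iff, ← IsUnit.neg_iff]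
  convert! hbij using 1
  rw [hT, Algebra.algebraMap_eq_smul_one]; abel


/-- If `p(A)` is compact, then every spectral point of `A` away from the zeros `ω_ι` of `p`
is an eigenvalue with finite-dimensional eigenspace, and outside any `δ`-neighborhood of
the `ω_ι` the spectrum of `A` is finite. -/
theorem spectrum_of_polynomially_compact
    {H : Type*} [NormedAddCommGroup H] [InnerProductSpace ℂ H] [CompleteSpace H]
    {L : ℕ} (hL : 0 < L) (ω : Fin L → ℝ) (hω : StrictMono ω)
    (A : H →L[ℂ] H) (hA : IsSelfAdjoint A)
    (pA : H →L[ℂ] H)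
    (hpA : pA = (List.ofFn fun ι : Fin L => A - (ω ι : ℂ) • 1).prod)
    (hcpt : IsCompactOperator pA) :
    (∀ μ : ℂ, μ ∈ spectrum ℂ A → (∀ ι : Fin L, μ ≠ (ω ι : ℂ)) →
      Module.End.HasEigenvalue (A : H →ₗ[ℂ] H) μ ∧
        FiniteDimensional ℂ (Module.End.eigenspace (A : H →ₗ[ℂ] H) μ)) ∧
    (∀ δ : ℝ, 0 < δ →
      {μ ∈ spectrum ℂ A | ∀ ι : Fin L, δ ≤ ‖μ - (ω ι : ℂ)‖}.Finite) := by
  have key : ∀ μ : ℂ, ∃ Q : H →L[ℂ] H,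
      pA = Q * (A - μ • 1) + (∏ ι, (μ - (ω ι : ℂ))) • 1 := by
    intro μ
    obtain ⟨Q, hQ⟩ := poly_factor_aux A μ (List.ofFn fun ι => (ω ι : ℂ))
    refine ⟨Q, ?_⟩
    rw [List.map_ofFn, List.map_ofFn, List.prod_ofFn (f := (fun w => μ - w) ∘ _)] at hQ
    rw [hpA]
    exact hQ
  have heig : ∀ μ : ℂ, ∀ x ∈ Module.End.eigenspace (A : H →ₗ[ℂ] H) μ,
      pA x = (∏ ι, (μ - (ω ι : ℂ))) • x := by
    intro μ x hx
    obtain ⟨Q, hQ⟩ := key μ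
    rw [Module.End.mem_eigenspace_iff] at hx
    have hx' : A x = μ • x := hx
    rw [hQ]
    simp [hx']
  have h1 : ∀ μ : ℂ, μ ∈ spectrum ℂ A → (∀ ι : Fin L, μ ≠ (ω ι : ℂ)) →
      Module.End.HasEigenvalue (A : H →ₗ[ℂ] H) μ := by
    intro μ hμ hne
    obtain ⟨Q, hQ⟩ := key μ
    exact eigen_aux A hA pA Q μ _
      (Finset.prod_ne_zero_iff.2 fun ι _ => sub_ne_zero.2 (hne ι)) hQ hcpt hμ
  refine ⟨fun μ hμ hne => ⟨h1 μ hμ hne, ?_⟩, ?_⟩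
  · have hfd := ContinuousLinearMap.finite_dimensional_eigenspace hcpt (∏ ι, (μ - (ω ι : ℂ)))
      (Finset.prod_ne_zero_iff.2 fun ι _ => sub_ne_zero.2 (hne ι))
    refine Submodule.finiteDimensional_of_le (S₂ := Module.End.eigenspace (pA : H →ₗ[ℂ] H)
      (∏ ι, (μ - (ω ι : ℂ)))) ?_
    intro x hx
    rw [Module.End.mem_eigenspace_iff]
    exact heig μ x hx
  · intro δ hδ
    by_contra hinf
    have hinf' : Set.Infinite {μ ∈ spectrum ℂ A | ∀ ι : Fin L, δ ≤ ‖μ - (ω ι : ℂ)‖} := hinf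
    let f := hinf'.natEmbedding
    have hv : ∀ n, ∃ v : H, ‖v‖ = 1 ∧
        v ∈ Module.End.eigenspace (A : H →ₗ[ℂ] H) (f n : ℂ) := by
      intro n
      obtain ⟨hs, hd⟩ := (f n).2
      obtain ⟨v, hv, hv0⟩ := (h1 _ hs (fun ι h => by
        have := hd ι
        rw [h] at this
        simp at this
        linarith)).exists_hasEigenvector
      refine ⟨((‖v‖⁻¹ : ℝ) : ℂ) • v, ?_, Submodule.smul_mem _ _ hv⟩
      rw [norm_smul]; simp [hv0]
    choose v hv1 hv using hv
    have hlow : ∀ n, δ ^ L ≤ ‖pA (v n)‖ := by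
      intro n
      rw [heig _ _ (hv n), norm_smul, hv1, mul_one, norm_prod]
      calc δ ^ L = ∏ _ι : Fin L, δ := by simp
        _ ≤ _ := Finset.prod_le_prod (fun _ _ => hδ.le) (fun ι _ => (f n).2.2 ι)
    have hsym : (A : H →ₗ[ℂ] H).IsSymmetric := hA.isSymmetric
    have horth : ∀ m n, m ≠ n → inner ℂ (pA (v m)) (pA (v n)) = 0 := by
      intro m n hmn
      have hne : (f m : ℂ) ≠ f n := fun h => hmn (f.injective (Subtype.ext h))
      have := hsym.orthogonalFamily_eigenspaces hne ⟨v m, hv m⟩ ⟨v n, hv n⟩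
      have h0 : inner ℂ (v m) (v n) = 0 := this
      rw [heig _ _ (hv n), heig _ _ (hv m), inner_smul_left, inner_smul_right, h0]
      simp
    obtain ⟨K, hK, hK'⟩ := IsCompactOperator.image_closedBall_subset_compact
      (f := (pA : H →ₗ[ℂ] H)) hcpt 1
    obtain ⟨y, -, φ, hφ, hy⟩ := hK.tendsto_subseq (fun n ↦ hK' ⟨v n, by simp [hv1], rfl⟩)
    obtain ⟨N, hN⟩ := Metric.cauchySeq_iff'.1 hy.cauchySeq (δ ^ L) (by positivity)
    have h2 : ‖pA (v (φ (N + 1))) - pA (v (φ N))‖ < δ ^ L := by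
      simpa [dist_eq_norm_sub] using hN (N + 1) (by simp)
    have h3 := horth (φ (N + 1)) (φ N) (fun h => by simpa using hφ.injective h)
    have h4 := norm_sub_sq (𝕜 := ℂ) (pA (v (φ (N + 1)))) (pA (v (φ N)))
    rw [h3] at h4
    have h5 := hlow (φ (N + 1))
    simp only [map_zero, mul_zero, sub_zero] at h4
    have h6 : ‖pA (v (φ (N + 1)))‖ ≤ ‖pA (v (φ (N + 1))) - pA (v (φ N))‖ := by
      apply le_of_sq_le_sq _ (norm_nonneg _)
      rw [h4]
      nlinarith [sq_nonneg ‖pA (v (φ N))‖]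
    linarith
end

section
/- For ξ ∈ ℝ²∖{0} define q(ξ) := (2μ|ξ|)^(−1/2)·(I₃ − (1 − √(1−m))·D(ξ)), z(ξ) := (2μ|ξ|)^(1/2)·(I₃ + ((1−m)^(−1/2) − 1)·D(ξ)), s(ξ) := (1/(2μ|ξ|))·(m·D(ξ) − I₃), and r(ξ) := 2μ|ξ|·(−((λ+μ)/(λ+3μ))·D(ξ) − I₃). Then (noting that 0 < 1 − m) q(ξ) is symmetric positive definite and the identities q(ξ)² = −s(ξ), q(ξ)·z(ξ) = I₃ and z(ξ)² = −r(ξ) hold. (Principal symbols of the square roots (−S)^(1/2) and (−S)^(−1/2) of the elastic single layer potential.) -/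
/-- The block-diagonal matrix `D(ξ) = diag(Λ(ξ), 1)`, `Λ(ξ)_{ij} = ξ_i ξ_j / |ξ|²`. -/
noncomputable def dMat (ξ : Fin 2 → ℝ) : Matrix (Fin 3) (Fin 3) ℝ :=
  Matrix.of fun p q =>
    (![ξ 0, ξ 1, 0] p * ![ξ 0, ξ 1, 0] q) / (ξ 0 ^ 2 + ξ 1 ^ 2) +
      (if p = 2 ∧ q = 2 then 1 else 0)

/-- Principal symbols of the square roots `(−S)^{1/2}` and `(−S)^{−1/2}` of the elastic
single layer potential: with `m = (λ+μ)/(2(λ+2μ))` (so `0 < 1 − m`),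
`q(ξ) = (2μ|ξ|)^{-1/2}(I₃ − (1 − √(1−m))D(ξ))` is positive definite,
`q(ξ)² = −s(ξ)`, `q(ξ)z(ξ) = I₃` and `z(ξ)² = −r(ξ)`. -/
theorem sqrt_symbols_of_single_layer
    (lam mu : ℝ) (hmu : 0 < mu) (hlam2mu : 0 < lam + 2 * mu)
    (m : ℝ) (hm : m = (lam + mu) / (2 * (lam + 2 * mu)))
    (ξ : Fin 2 → ℝ) (hξ : ξ ≠ 0)
    (q z s r : Matrix (Fin 3) (Fin 3) ℝ)
    (hq : q = (Real.sqrt (2 * mu * Real.sqrt (ξ 0 ^ 2 + ξ 1 ^ 2)))⁻¹ •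
      ((1 : Matrix (Fin 3) (Fin 3) ℝ) - (1 - Real.sqrt (1 - m)) • dMat ξ))
    (hz : z = Real.sqrt (2 * mu * Real.sqrt (ξ 0 ^ 2 + ξ 1 ^ 2)) •
      ((1 : Matrix (Fin 3) (Fin 3) ℝ) + ((Real.sqrt (1 - m))⁻¹ - 1) • dMat ξ))
    (hs : s = (1 / (2 * mu * Real.sqrt (ξ 0 ^ 2 + ξ 1 ^ 2))) •
      (m • dMat ξ - 1))
    (hr : r = (2 * mu * Real.sqrt (ξ 0 ^ 2 + ξ 1 ^ 2)) •
      (-((lam + mu) / (lam + 3 * mu)) • dMat ξ - 1)) :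
    0 < 1 - m ∧ q.PosDef ∧ q * q = -s ∧ q * z = 1 ∧ z * z = -r := by
  have hN : 0 < ξ 0 ^ 2 + ξ 1 ^ 2 := by
    by_contra h
    apply hξ
    have h0 : ξ 0 = 0 := by nlinarith [sq_nonneg (ξ 0), sq_nonneg (ξ 1)]
    have h1 : ξ 1 = 0 := by nlinarith [sq_nonneg (ξ 0), sq_nonneg (ξ 1)]
    ext i
    fin_cases i
    · exact h0
    · exact h1
  have hDD : dMat ξ * dMat ξ = dMat ξ := by
    have hN' := hN.ne'
    ext i j
    fin_cases i <;> fin_cases j <;>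
      simp [dMat, Matrix.mul_apply, Fin.sum_univ_three] <;> field_simp
  have hDT : (dMat ξ).conjTranspose = dMat ξ := by
    ext i j
    fin_cases i <;> fin_cases j <;> simp [dMat, mul_comm]
  have h3 : 0 < lam + 3 * mu := by linarith
  have h2ne : lam + 2 * mu ≠ 0 := hlam2mu.ne'
  have h3ne : lam + 3 * mu ≠ 0 := h3.ne'
  have hm1 : 1 - m = (lam + 3 * mu) / (2 * (lam + 2 * mu)) := by
    rw [hm, one_sub_div (mul_ne_zero two_ne_zero h2ne)]; congr 1; ring
  have hpos : 0 < 1 - m := by rw [hm1]; positivity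
  have hr1 : (lam + mu) / (lam + 3 * mu) = (1 - m)⁻¹ - 1 := by
    rw [hm1, inv_div, div_sub_one h3ne]; congr 1; ring
  have hK : 0 < 2 * mu * Real.sqrt (ξ 0 ^ 2 + ξ 1 ^ 2) := by positivity
  rw [hr1] at hr
  generalize 2 * mu * Real.sqrt (ξ 0 ^ 2 + ξ 1 ^ 2) = K at *
  obtain ⟨k, hk, rfl⟩ : ∃ k : ℝ, 0 < k ∧ K = k ^ 2 :=
    ⟨Real.sqrt K, Real.sqrt_pos.2 hK, (Real.sq_sqrt hK.le).symm⟩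
  rw [Real.sqrt_sq hk.le] at hq hz
  obtain ⟨b, hb, hbm⟩ : ∃ b : ℝ, 0 < b ∧ 1 - m = b ^ 2 :=
    ⟨Real.sqrt (1 - m), Real.sqrt_pos.2 hpos, (Real.sq_sqrt hpos.le).symm⟩
  have hmb : m = 1 - b ^ 2 := by linarith
  rw [hbm] at hq hz hr
  rw [hmb] at hs
  rw [Real.sqrt_sq hb.le] at hq hz
  generalize dMat ξ = D at *
  have key : ∀ x y u v : ℝ, (x • ((1 : Matrix (Fin 3) (Fin 3) ℝ) + y • D)) *
      (u • ((1 : Matrix (Fin 3) (Fin 3) ℝ) + v • D)) =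
      (x * u) • ((1 : Matrix (Fin 3) (Fin 3) ℝ) + (y + v + y * v) • D) := by
    intro x y u v
    simp only [smul_mul_assoc, mul_smul_comm, add_mul, mul_add, one_mul, mul_one, hDD]
    module
  have hq' : q = k⁻¹ • ((1 : Matrix (Fin 3) (Fin 3) ℝ) + (b - 1) • D) := by
    rw [hq]; module
  refine ⟨hpos, ?_, ?_, ?_, ?_⟩
  · -- q is the square of a self-adjoint invertible matrix
    obtain ⟨c, hc, rfl⟩ : ∃ c : ℝ, 0 < c ∧ b = c ^ 2 :=
      ⟨Real.sqrt b, Real.sqrt_pos.2 hb, (Real.sq_sqrt hb.le).symm⟩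
    have hB : ((1 : ℝ) • ((1 : Matrix (Fin 3) (Fin 3) ℝ) + (c⁻¹ - 1) • D)) *
        ((1 : ℝ) • ((1 : Matrix (Fin 3) (Fin 3) ℝ) + (c - 1) • D)) = 1 := by
      rw [key]
      have : c⁻¹ - 1 + (c - 1) + (c⁻¹ - 1) * (c - 1) = 0 := by field_simp; ring
      rw [this]; simp
    have hBB := key 1 (c - 1) 1 (c - 1)
    have hBH : ((1 : ℝ) • ((1 : Matrix (Fin 3) (Fin 3) ℝ) + (c - 1) • D)).conjTranspose
        = (1 : ℝ) • ((1 : Matrix (Fin 3) (Fin 3) ℝ) + (c - 1) • D) := by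
      simp only [Matrix.conjTranspose_add, Matrix.conjTranspose_smul, Matrix.conjTranspose_one, hDT,
        star_trivial]
    generalize (1 : ℝ) • ((1 : Matrix (Fin 3) (Fin 3) ℝ) + (c - 1) • D) = B at *
    have hinj : Function.Injective B.mulVec := by
      intro x y hxy
      have := congrArg (Matrix.mulVec ((1 : ℝ) • ((1 : Matrix (Fin 3) (Fin 3) ℝ) + (c⁻¹ - 1) • D))) hxy
      simpa only [Matrix.mulVec_mulVec, hB, Matrix.one_mulVec] using this
    have hP := Matrix.PosDef.conjTranspose_mul_self B hinj
    have : q = k⁻¹ • (B.conjTranspose * B) := by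
      rw [hq', hBH, hBB]
      module
    rw [this]
    exact hP.smul (inv_pos.2 hk)
  · rw [hq', key, hs]
    have : k⁻¹ * k⁻¹ = 1 / k ^ 2 := by field_simp
    rw [this]; module
  · rw [hq', hz, key]
    have : b - 1 + (b⁻¹ - 1) + (b - 1) * (b⁻¹ - 1) = 0 := by field_simp; ring
    rw [this, inv_mul_cancel₀ hk.ne']; simp
  · rw [hz, key, hr]
    have : b⁻¹ - 1 + (b⁻¹ - 1) + (b⁻¹ - 1) * (b⁻¹ - 1) = (b ^ 2)⁻¹ - 1 := by
      field_simp; ring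
    rw [this]; module
end

section
/- For every ξ = (ξ₁,ξ₂) ∈ ℝ²∖{0}, the matrices k₀(ξ) := (i·𝕜/|ξ|)·[[0,0,−ξ₁],[0,0,−ξ₂],[ξ₁,ξ₂,0]] and D(ξ) commute: D(ξ)·k₀(ξ) = k₀(ξ)·D(ξ). Consequently, with q(ξ) := (2μ|ξ|)^(−1/2)·(I₃ − (1 − √(1−m))·D(ξ)) and z(ξ) := (2μ|ξ|)^(1/2)·(I₃ + ((1−m)^(−1/2) − 1)·D(ξ)), one has q(ξ)·k₀(ξ)·z(ξ) = k₀(ξ). (The symmetrized Neumann–Poincaré operator (−S)^(−1/2)·K·(−S)^(1/2) has the same principal symbol k₀ as K.) -/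
/-- The principal symbol `k₀(ξ)` of the elastic Neumann–Poincaré operator. -/
noncomputable def npPrincipalSymbol (lam mu : ℝ) (ξ : Fin 2 → ℝ) :
    Matrix (Fin 3) (Fin 3) ℂ :=
  ((Complex.I * ((mu / (2 * (lam + 2 * mu)) : ℝ) : ℂ)) /
      ((Real.sqrt (ξ 0 ^ 2 + ξ 1 ^ 2) : ℝ) : ℂ)) •
    !![0, 0, -((ξ 0 : ℝ) : ℂ);
       0, 0, -((ξ 1 : ℝ) : ℂ);
       ((ξ 0 : ℝ) : ℂ), ((ξ 1 : ℝ) : ℂ), 0]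

/-- `D(ξ) k₀(ξ) = k₀(ξ)`. -/
theorem dMat_mul_np (lam mu : ℝ) (ξ : Fin 2 → ℝ) (h : ξ 0 ^ 2 + ξ 1 ^ 2 ≠ 0) :
    (dMat ξ).map (algebraMap ℝ ℂ) * npPrincipalSymbol lam mu ξ = npPrincipalSymbol lam mu ξ := by
  have hc : ((ξ 0 : ℂ)) ^ 2 + (ξ 1 : ℂ) ^ 2 ≠ 0 := by exact_mod_cast h
  unfold npPrincipalSymbol
  rw [Matrix.mul_smul]
  congr 1
  ext i j
  fin_cases i <;> fin_cases j <;>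
    simp [dMat, Matrix.mul_apply, Fin.sum_univ_three] <;> field_simp <;> ring

/-- `k₀(ξ) D(ξ) = k₀(ξ)`. -/
theorem np_mul_dMat (lam mu : ℝ) (ξ : Fin 2 → ℝ) (h : ξ 0 ^ 2 + ξ 1 ^ 2 ≠ 0) :
    npPrincipalSymbol lam mu ξ * (dMat ξ).map (algebraMap ℝ ℂ) = npPrincipalSymbol lam mu ξ := by
  have hc : ((ξ 0 : ℂ)) ^ 2 + (ξ 1 : ℂ) ^ 2 ≠ 0 := by exact_mod_cast h
  unfold npPrincipalSymbol
  rw [Matrix.smul_mul]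
  congr 1
  ext i j
  fin_cases i <;> fin_cases j <;>
    simp [dMat, Matrix.mul_apply, Fin.sum_univ_three] <;> field_simp <;> ring

/-- `D(ξ)` commutes with `k₀(ξ)`; consequently, with
`q(ξ) = (2μ|ξ|)^{-1/2}(I₃ − (1 − √(1−m))D(ξ))` and
`z(ξ) = (2μ|ξ|)^{1/2}(I₃ + ((1−m)^{-1/2} − 1)D(ξ))`, one has `q(ξ)·k₀(ξ)·z(ξ) = k₀(ξ)`:
the symmetrized NP operator has the same principal symbol as the NP operator itself. -/
theorem symmetrized_np_same_principal_symbol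
    (lam mu : ℝ) (hmu : 0 < mu) (hlam2mu : 0 < lam + 2 * mu)
    (m : ℝ) (hm : m = (lam + mu) / (2 * (lam + 2 * mu)))
    (ξ : Fin 2 → ℝ) (hξ : ξ ≠ 0)
    (q z : Matrix (Fin 3) (Fin 3) ℝ)
    (hq : q = (Real.sqrt (2 * mu * Real.sqrt (ξ 0 ^ 2 + ξ 1 ^ 2)))⁻¹ •
      ((1 : Matrix (Fin 3) (Fin 3) ℝ) - (1 - Real.sqrt (1 - m)) • dMat ξ))
    (hz : z = Real.sqrt (2 * mu * Real.sqrt (ξ 0 ^ 2 + ξ 1 ^ 2)) •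
      ((1 : Matrix (Fin 3) (Fin 3) ℝ) + ((Real.sqrt (1 - m))⁻¹ - 1) • dMat ξ)) :
    (dMat ξ).map (algebraMap ℝ ℂ) * npPrincipalSymbol lam mu ξ =
      npPrincipalSymbol lam mu ξ * (dMat ξ).map (algebraMap ℝ ℂ) ∧
    q.map (algebraMap ℝ ℂ) * npPrincipalSymbol lam mu ξ * z.map (algebraMap ℝ ℂ) =
      npPrincipalSymbol lam mu ξ := by
  have h : 0 < ξ 0 ^ 2 + ξ 1 ^ 2 := by
    by_contra hn
    apply hξ
    have h0 : ξ 0 = 0 := by nlinarith [sq_nonneg (ξ 0), sq_nonneg (ξ 1)]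
    have h1 : ξ 1 = 0 := by nlinarith [sq_nonneg (ξ 0), sq_nonneg (ξ 1)]
    ext i
    fin_cases i
    · exact h0
    · exact h1
  have hD := dMat_mul_np lam mu ξ h.ne'
  have hE := np_mul_dMat lam mu ξ h.ne'
  refine ⟨hD.trans hE.symm, ?_⟩
  have hr : 0 < Real.sqrt (1 - m) := by
    apply Real.sqrt_pos.mpr
    rw [hm, sub_pos, div_lt_one (by positivity)]
    linarith
  have hs : 0 < Real.sqrt (2 * mu * Real.sqrt (ξ 0 ^ 2 + ξ 1 ^ 2)) := by positivity
  generalize Real.sqrt (2 * mu * Real.sqrt (ξ 0 ^ 2 + ξ 1 ^ 2)) = s at *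
  generalize Real.sqrt (1 - m) = r at *
  generalize npPrincipalSymbol lam mu ξ = K at *
  have hr' : (r : ℂ) ≠ 0 := by exact_mod_cast hr.ne'
  have hs' : (s : ℂ) ≠ 0 := by exact_mod_cast hs.ne'
  have hq' : q.map (algebraMap ℝ ℂ) =
      (s : ℂ)⁻¹ • (1 - (1 - (r : ℂ)) • (dMat ξ).map (algebraMap ℝ ℂ)) := by
    subst hq
    ext i j
    by_cases hij : i = j <;> simp [Matrix.one_apply, hij]
  have hz' : z.map (algebraMap ℝ ℂ) =
      (s : ℂ) • (1 + ((r : ℂ)⁻¹ - 1) • (dMat ξ).map (algebraMap ℝ ℂ)) := by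
    subst hz
    ext i j
    by_cases hij : i = j <;> simp [Matrix.one_apply, hij] <;> ring
  have e1 : q.map (algebraMap ℝ ℂ) * K = ((s : ℂ)⁻¹ * r) • K := by
    rw [hq', Matrix.smul_mul, Matrix.sub_mul, Matrix.smul_mul, hD, Matrix.one_mul]
    module
  have e2 : K * z.map (algebraMap ℝ ℂ) = ((s : ℂ) * (r : ℂ)⁻¹) • K := by
    rw [hz', Matrix.mul_smul, Matrix.mul_add, Matrix.mul_smul, hE, Matrix.mul_one]
    module
  rw [e1, Matrix.smul_mul, e2, smul_smul]
  have : (s : ℂ)⁻¹ * r * (s * (r : ℂ)⁻¹) = 1 := by field_simp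
  rw [this, one_smul]
end
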